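/- The isotomcomplement Q is the unique fixed point of T in the plane: T(Q) = Q, and for every point R, if T(R) = R then R = Q. (The existence of the ordinary point P' encodes the hypothesis that P does not lie on the Steiner circumellipse of ABC.) -/

import Mathlib

open EuclideanGeometry Affine

local notation "Pt" => EuclideanSpace ℝ (Fin 2)

theorem col_iff (X Y Z : EuclideanSpace ℝ (Fin 2)) :
    Collinear ℝ {X, Y, Z} ↔ (Y 0 - X 0) * (Z 1 - X 1) - (Y 1 - X 1) * (Z 0 - X 0) = 0 := by
  rw [collinear_iff_of_mem (p₀ := X) (by simp)]
  constructor
  · rintro ⟨v, h⟩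
    obtain ⟨a, ha⟩ := h Y (by simp)
    obtain ⟨b, hb⟩ := h Z (by simp)
    subst ha hb
    simp
    ring
  · intro h
    by_cases hXY : Y = X
    · refine ⟨Z - X, ?_⟩
      intro p hp
      simp only [Set.mem_insert_iff, Set.mem_singleton_iff] at hp
      rcases hp with rfl | rfl | rfl
      · exact ⟨0, by simp⟩
      · exact ⟨0, by simp [hXY]⟩
      · exact ⟨1, by simp⟩
    · refine ⟨Y - X, ?_⟩
      intro p hp
      simp only [Set.mem_insert_iff, Set.mem_singleton_iff] at hp
      rcases hp with rfl | rfl | rfl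
      · exact ⟨0, by simp⟩
      · exact ⟨1, by simp⟩
      · by_cases h0 : Y 0 - X 0 = 0
        · have h1 : Y 1 - X 1 ≠ 0 := by
            intro h1
            apply hXY
            ext i
            fin_cases i
            · simpa using sub_eq_zero.1 h0
            · simpa using sub_eq_zero.1 h1
          refine ⟨(p 1 - X 1) / (Y 1 - X 1), ?_⟩
          ext i
          fin_cases i
          · simp
            field_simp
            linear_combination -h
          · simp
            field_simp
            ring
        · refine ⟨(p 0 - X 0) / (Y 0 - X 0), ?_⟩
          ext i
          fin_cases i
          · simp
            field_simp
            ring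
          · simp
            field_simp
            linear_combination h

theorem real_core (q r d1 d2 e1 e2 f1 f2 y z : ℝ)
    (hp : 1 - q - r ≠ 0) (hq : q ≠ 0) (hr : r ≠ 0)
    (hD : d1 + d2 = 1) (hDc : q * d2 - r * d1 = 0)
    (hE : e1 = 0) (hEc : (q - 1) * e2 - r * (e1 - 1) = 0)
    (hF : f2 = 0) (hFc : q * (f2 - 1) - (r - 1) * f1 = 0)
    (ha : d2 * z - d1 * y = 0)
    (hb : -z - (1 - e2) * (y - 1) = 0)
    (hc : (1 - f1) * (z - 1) + y = 0) (a b : ℝ) :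
    (d1 + a * (e1 - d1) + b * (f1 - d1) = a ∧ d2 + a * (e2 - d2) + b * (f2 - d2) = b) ↔
      (a = (1 - y) / 2 ∧ b = (1 - z) / 2) := by
  subst hE hF
  have hqr : q + r ≠ 0 := by
    intro h
    have : q = 0 := by linear_combination -q * hD + hDc + d1 * h
    exact hq this
  have h1q : 1 - q ≠ 0 := by
    intro h
    exact hr (by linear_combination hEc + e2 * h)
  have h1r : 1 - r ≠ 0 := by
    intro h
    exact hq (by linear_combination -hFc + f1 * h)
  obtain rfl : d1 = q / (q + r) := by
    field_simp; linear_combination q * hD - hDc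
  obtain rfl : d2 = r / (q + r) := by
    field_simp; linear_combination r * hD + hDc - r * hD + r * hD
  obtain rfl : e2 = r / (1 - q) := by
    field_simp; linear_combination -hEc
  obtain rfl : f1 = q / (1 - r) := by
    field_simp; linear_combination hFc
  field_simp at ha hb hc
  have hS : z * (q * r + (1 - q - r) * (q + r)) = (1 - q - r) * q := by
    linear_combination -q * hb + (1 - q - r) * ha
  have hS' : y * (q * r + (1 - q - r) * (q + r)) = (1 - q - r) * r := by
    linear_combination r * hc - (1 - q - r) * ha
  have hS0 : q * r + (1 - q - r) * (q + r) ≠ 0 := by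
    intro h
    rw [h, mul_zero] at hS
    exact mul_ne_zero hp hq hS.symm
  obtain ⟨i, hi⟩ : ∃ i, (q * r + (1 - q - r) * (q + r)) * i = 1 := ⟨_, mul_inv_cancel₀ hS0⟩
  have hz : z = (1 - q - r) * q * i := by linear_combination i * hS - z * hi
  have hy : y = (1 - q - r) * r * i := by linear_combination i * hS' - y * hi
  obtain ⟨U, hU⟩ : ∃ U, 1 - a - b = U * (q + r) := ⟨(1 - a - b) / (q + r), by field_simp⟩
  obtain ⟨V, rfl⟩ : ∃ V, a = V * (1 - q) := ⟨a / (1 - q), by field_simp⟩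
  obtain ⟨W, rfl⟩ : ∃ W, b = W * (1 - r) := ⟨b / (1 - r), by field_simp⟩
  have e1 : q / (q + r) + V * (1 - q) * (0 - q / (q + r)) +
      W * (1 - r) * (q / (1 - r) - q / (q + r)) = q * (U + W) := by
    have t1 : q / (1 - r) * (1 - r) = q := by field_simp
    have t2 : q / (q + r) * (q + r) = q := by field_simp
    linear_combination W * t1 + U * t2 + q / (q + r) * hU
  have e2 : r / (q + r) + V * (1 - q) * (r / (1 - q) - r / (q + r)) +
      W * (1 - r) * (0 - r / (q + r)) = r * (U + V) := by
    have t1 : r / (1 - q) * (1 - q) = r := by field_simp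
    have t2 : r / (q + r) * (q + r) = r := by field_simp
    linear_combination V * t1 + U * t2 + r / (q + r) * hU
  rw [e1, e2]
  constructor
  · rintro ⟨h1, h2⟩
    have hV : V = q * (U + V + W) := by linear_combination -h1
    have hW : W = r * (U + V + W) := by linear_combination -h2
    have hs : 1 = 2 * (q * r + (1 - q - r) * (q + r)) * (U + V + W) := by
      linear_combination hU + (1 - 2 * q - r) * hV + (1 - q - 2 * r) * hW
    have hs' : U + V + W = i / 2 := by linear_combination -(i / 2) * hs - (U + V + W) * hi
    rw [hs'] at hV hW
    constructor
    · linear_combination (1 - q) * hV + hi / 2 + hy / 2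
    · linear_combination (1 - r) * hW + hi / 2 + hz / 2
  · rintro ⟨h1, h2⟩
    have hV : V = q * i / 2 := by
      apply mul_right_cancel₀ h1q
      linear_combination h1 - hi / 2 - hy / 2
    have hW : W = r * i / 2 := by
      apply mul_right_cancel₀ h1r
      linear_combination h2 - hi / 2 - hz / 2
    have hU' : U = (1 - q - r) * i / 2 := by
      apply mul_right_cancel₀ hqr
      rw [hV, hW] at hU
      linear_combination -hU - hi
    rw [hU', hV, hW]
    constructor <;> ring

theorem stmt_17 (A B C G P D E F D0 E0 F0 D3 E3 F3 P' Q : Pt) (T : Pt →ᵃ[ℝ] Pt)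
(hABC : AffineIndependent ℝ ![A, B, C])
    (hG : G = (1/3 : ℝ) • (A + B + C))
    (hPa : ¬ Collinear ℝ {B, C, P})
    (hPb : ¬ Collinear ℝ {C, A, P})
    (hPc : ¬ Collinear ℝ {A, B, P})
    (hD : Collinear ℝ {B, C, D}) (hDcev : Collinear ℝ {A, P, D})
    (hE : Collinear ℝ {C, A, E}) (hEcev : Collinear ℝ {B, P, E})
    (hF : Collinear ℝ {A, B, F}) (hFcev : Collinear ℝ {C, P, F})
    (hD0 : D0 = midpoint ℝ B C) (hE0 : E0 = midpoint ℝ C A) (hF0 : F0 = midpoint ℝ A B)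
(hD3 : D3 = Equiv.pointReflection D0 D)
    (hE3 : E3 = Equiv.pointReflection E0 E)
    (hF3 : F3 = Equiv.pointReflection F0 F)
(hP'a : Collinear ℝ {A, D3, P'})
    (hP'b : Collinear ℝ {B, E3, P'})
    (hP'c : Collinear ℝ {C, F3, P'})
    (hQ : Q = AffineMap.homothety G (-1/2 : ℝ) P')
    (hTA : T A = D) (hTB : T B = E) (hTC : T C = F) :
    T Q = Q ∧ ∀ R : Pt, T R = R → R = Q := by
  obtain ⟨u0, hu0⟩ : ∃ t, t = B 0 - A 0 := ⟨_, rfl⟩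
  obtain ⟨u1, hu1⟩ : ∃ t, t = B 1 - A 1 := ⟨_, rfl⟩
  obtain ⟨v0, hv0⟩ : ∃ t, t = C 0 - A 0 := ⟨_, rfl⟩
  obtain ⟨v1, hv1⟩ : ∃ t, t = C 1 - A 1 := ⟨_, rfl⟩
  have hΔ : u0 * v1 - u1 * v0 ≠ 0 := by
    rw [affineIndependent_iff_not_collinear_set, col_iff] at hABC
    rwa [hu0, hu1, hv0, hv1]
  have key : ∀ X : Pt, ∃ a b : ℝ, X = A + a • (B - A) + b • (C - A) := by
    intro X
    obtain ⟨i, hi⟩ : ∃ i, (u0 * v1 - u1 * v0) * i = 1 := ⟨_, mul_inv_cancel₀ hΔ⟩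
    refine ⟨((X 0 - A 0) * v1 - (X 1 - A 1) * v0) * i,
      (u0 * (X 1 - A 1) - u1 * (X 0 - A 0)) * i, ?_⟩
    ext i
    fin_cases i
    · simp [← hu0, ← hv0]
      linear_combination -(X 0 - A 0) * hi
    · simp [← hu1, ← hv1]
      linear_combination -(X 1 - A 1) * hi
  have inj : ∀ a b a' b' : ℝ,
      A + a • (B - A) + b • (C - A) = A + a' • (B - A) + b' • (C - A) ↔ a = a' ∧ b = b' := by
    intro a b a' b'
    constructor
    · intro h
      have h0 := congrArg (fun X : Pt => X 0) h
      have h1 := congrArg (fun X : Pt => X 1) h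
      simp [← hu0, ← hv0] at h0
      simp [← hu1, ← hv1] at h1
      constructor
      · apply mul_right_cancel₀ hΔ
        linear_combination v1 * h0 - v0 * h1
      · apply mul_right_cancel₀ hΔ
        linear_combination u0 * h1 - u1 * h0
    · rintro ⟨rfl, rfl⟩; rfl
  have col : ∀ a b c d e f : ℝ, Collinear ℝ {A + a • (B - A) + b • (C - A),
      A + c • (B - A) + d • (C - A), A + e • (B - A) + f • (C - A)} ↔
      (c - a) * (f - b) - (d - b) * (e - a) = 0 := by
    intro a b c d e f
    rw [col_iff]
    simp only [PiLp.add_apply, PiLp.smul_apply, PiLp.sub_apply, smul_eq_mul, ← hu0, ← hu1, ← hv0, ← hv1]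
    constructor
    · intro h
      apply (mul_eq_zero.1 (?_ : (u0 * v1 - u1 * v0) * _ = 0)).resolve_left hΔ
      linear_combination h
    · intro h
      linear_combination (u0 * v1 - u1 * v0) * h
  have hT : ∀ a b : ℝ, T (A + a • (B - A) + b • (C - A)) = D + a • (E - D) + b • (F - D) := by
    intro a b
    rw [← hTA, ← hTB, ← hTC]
    have h1 : ∀ X Y : Pt, T X - T Y = T.linear (X - Y) := fun X Y => (T.linearMap_vsub X Y).symm
    have h2 := T.map_vadd A (a • (B - A) + b • (C - A))
    rw [h1, h1, ← map_smul, ← map_smul]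
    simp only [vadd_eq_add, map_add] at h2
    rw [show A + a • (B - A) + b • (C - A) = (a • (B - A) + b • (C - A)) + A by abel, h2]
    abel
  have hA : A = A + (0:ℝ) • (B - A) + (0:ℝ) • (C - A) := by simp
  have hB : B = A + (1:ℝ) • (B - A) + (0:ℝ) • (C - A) := by simp
  have hC : C = A + (0:ℝ) • (B - A) + (1:ℝ) • (C - A) := by simp
  obtain ⟨q, r, hP⟩ := key P
  obtain ⟨d1, d2, hDD⟩ := key D
  obtain ⟨e1, e2, hEE⟩ := key E
  obtain ⟨f1, f2, hFF⟩ := key F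
  obtain ⟨y, z, hPP⟩ := key P'
  have hD3' : D3 = A + (1 - d1) • (B - A) + (1 - d2) • (C - A) := by
    rw [hD3, hD0, hDD]
    ext i
    simp [Equiv.pointReflection_apply, midpoint_eq_smul_add]
    ring
  have hE3' : E3 = A + (0 - e1) • (B - A) + (1 - e2) • (C - A) := by
    rw [hE3, hE0, hEE]
    ext i
    simp [Equiv.pointReflection_apply, midpoint_eq_smul_add]
    ring
  have hF3' : F3 = A + (1 - f1) • (B - A) + (0 - f2) • (C - A) := by
    rw [hF3, hF0, hFF]
    ext i
    simp [Equiv.pointReflection_apply, midpoint_eq_smul_add]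
    ring
  have hQ' : Q = A + ((1 - y) / 2) • (B - A) + ((1 - z) / 2) • (C - A) := by
    rw [hQ, hG, hPP]
    ext i
    simp [AffineMap.homothety_apply]
    ring
  have cl : ∀ {X Y Z : Pt} {a b c d e f : ℝ}, X = A + a • (B - A) + b • (C - A) →
      Y = A + c • (B - A) + d • (C - A) → Z = A + e • (B - A) + f • (C - A) →
      (Collinear ℝ {X, Y, Z} ↔ (c - a) * (f - b) - (d - b) * (e - a) = 0) := by
    intro X Y Z a b c d e f hX hY hZ
    rw [hX, hY, hZ, col]
  rw [cl hB hC hP] at hPa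
  rw [cl hC hA hP] at hPb
  rw [cl hA hB hP] at hPc
  rw [cl hB hC hDD] at hD
  rw [cl hA hP hDD] at hDcev
  rw [cl hC hA hEE] at hE
  rw [cl hB hP hEE] at hEcev
  rw [cl hA hB hFF] at hF
  rw [cl hC hP hFF] at hFcev
  rw [cl hA hD3' hPP] at hP'a
  rw [cl hB hE3' hPP] at hP'b
  rw [cl hC hF3' hPP] at hP'c
  have he1 : e1 = 0 := by linear_combination hE
  have hf2 : f2 = 0 := by linear_combination hF
  have hd : d1 + d2 = 1 := by linear_combination -hD
  have core := real_core q r d1 d2 e1 e2 f1 f2 y z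
    (fun h => hPa (by linear_combination h)) (fun h => hPb (by linear_combination h))
    (fun h => hPc (by linear_combination h))
    hd (by linear_combination hDcev)
    he1 (by linear_combination hEcev) hf2 (by linear_combination hFcev)
    (by linear_combination hP'a + (z - y) * hd)
    (by linear_combination hP'b + z * he1) (by linear_combination hP'c - y * hf2)
  have fixd : ∀ a b : ℝ, T (A + a • (B - A) + b • (C - A)) = A + a • (B - A) + b • (C - A) ↔
      (a = (1 - y) / 2 ∧ b = (1 - z) / 2) := by
    intro a b
    rw [← core, ← inj, hT]
    have : D + a • (E - D) + b • (F - D) =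
        A + (d1 + a * (e1 - d1) + b * (f1 - d1)) • (B - A) +
          (d2 + a * (e2 - d2) + b * (f2 - d2)) • (C - A) := by
      rw [hDD, hEE, hFF]
      module
    rw [this]
  constructor
  · rw [hQ', fixd]
    exact ⟨rfl, rfl⟩
  · intro R hR
    obtain ⟨a, b, rfl⟩ := key R
    obtain ⟨h1, h2⟩ := (fixd a b).1 hR
    rw [hQ', h1, h2]
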